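/- Let (q, p) be the global solution of (HS) with initial datum (q(0), p(0)) = (0, √2). Then t ↦ q(t) is increasing on [0, +∞) and q(t) → 1 as t → +∞. -/

import Mathlib

open Real Set Filter MeasureTheory
open scoped Topology

/-- The potential `g` from the Hamiltonian `H(x,p) = p²/2 + g(x)`. -/
noncomputable def g (x : ℝ) : ℝ := if |x| ≤ 1 then 1 - (1 - x ^ 2) ^ 4 else 1

/-- The derivative of `g`. -/
noncomputable def g' (x : ℝ) : ℝ := if |x| ≤ 1 then 8 * x * (1 - x ^ 2) ^ 3 else 0

/-- `(q, p)` is a (global) solution of the Hamiltonian system (HS): `q̇ = p`, `ṗ = -g'(q)`. -/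
def IsHSSol (q p : ℝ → ℝ) : Prop :=
  (∀ t : ℝ, HasDerivAt q (p t) t) ∧ (∀ t : ℝ, HasDerivAt p (-(g' (q t))) t)

/-- `F` is the flow of (HS): `F t q₀ p₀ = (q t, p t)` for the solution with data `(q₀, p₀)`. -/
def IsHSFlow (F : ℝ → ℝ → ℝ → ℝ × ℝ) : Prop :=
  ∀ q₀ p₀ : ℝ,
    IsHSSol (fun t => (F t q₀ p₀).1) (fun t => (F t q₀ p₀).2) ∧ F 0 q₀ p₀ = (q₀, p₀)

/-- The set `([0,∞) × {2}) ∪ ({0} × (0,2])`, codomain of the map `Δ`. -/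
def Dset : Set (ℝ × ℝ) := (Ici (0:ℝ) ×ˢ ({2} : Set ℝ)) ∪ ({(0:ℝ)} ×ˢ Ioc (0:ℝ) 2)

/-- `T` is the smallest positive period of `q`. -/
def IsSmallestPeriod (q : ℝ → ℝ) (T : ℝ) : Prop :=
  0 < T ∧ Function.Periodic q T ∧ ∀ T' : ℝ, 0 < T' → Function.Periodic q T' → T ≤ T'

/-- `T` is the period map `𝒯`, assigning to `p₀ ∈ (0, √2)` the smallest positive period of
the `q`-component of the solution of (HS) with initial datum `(0, p₀)`. -/
def IsPeriodMap (F : ℝ → ℝ → ℝ → ℝ × ℝ) (T : ℝ → ℝ) : Prop :=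
  ∀ p₀ ∈ Ioo (0:ℝ) (Real.sqrt 2), IsSmallestPeriod (fun t => (F t 0 p₀).1) (T p₀)

/-- `Δ` associates to `(t,x)` the datum in `Dset` whose orbit stays positive on `(0,t)`
and reaches `x` at time `t`. -/
def IsDeltaMap (F : ℝ → ℝ → ℝ → ℝ × ℝ) (Δ : ℝ → ℝ → ℝ × ℝ) : Prop :=
  ∀ t x : ℝ, 0 < t → 0 < x →
    Δ t x ∈ Dset ∧ (F t (Δ t x).1 (Δ t x).2).1 = x ∧
      ∀ s ∈ Ioo (0:ℝ) t, 0 < (F s (Δ t x).1 (Δ t x).2).1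

/-- The solution `u` of the conservation law built from the flow `F` and the map `Δ`
(extended by `0` at `x = 0`). -/
noncomputable def usol (F : ℝ → ℝ → ℝ → ℝ × ℝ) (Δ : ℝ → ℝ → ℝ × ℝ) (t x : ℝ) : ℝ :=
  if 0 < x then (F t (Δ t x).1 (Δ t x).2).2
  else if x < 0 then -(F t (Δ t (-x)).1 (Δ t (-x)).2).2
  else 0

/-!
Write `1 - g = W ^ 2 / 2` with `W x = √2 * (max (1 - x ^ 2) 0) ^ 2`, so that `-g' = W * W'` and the
energy level of the datum `(0, √2)` contains the curve `p = W q`. Along a solution the defect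
`p - W q` solves the linear equation `y' = -W'(q) y`, so it vanishes identically, and `q` solves
`q' = W q`. Then `q'` itself solves `y' = W'(q) y` and stays positive, so `q` increases without ever
reaching the zero `1` of `W`. Its limit is a zero of `W` in `(0, 1]`, that is, `1`.
-/

theorem eq_exp_integral_smul_of_hasDerivAt_smul {E : Type*} [NormedAddCommGroup E]
    [NormedSpace ℝ E] {a : ℝ → ℝ} {y : ℝ → E} (ha : Continuous a)
    (hy : ∀ t, HasDerivAt y (a t • y t) t) (t₀ t : ℝ) :
    y t = exp (∫ s in t₀..t, a s) • y t₀ := by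
  have hasDerivAt_zero (t : ℝ) :
      HasDerivAt (fun t => exp (-∫ s in t₀..t, a s) • y t) 0 t := by
    have hexp := (ha.integral_hasStrictDerivAt t₀ t).hasDerivAt.neg.exp
    exact (hexp.smul (hy t)).congr_deriv (by module)
  have hconst : exp (-∫ s in t₀..t, a s) • y t = y t₀ := by
    simpa using is_const_of_deriv_eq_zero (fun t => (hasDerivAt_zero t).differentiableAt)
      (fun t => (hasDerivAt_zero t).deriv) t t₀
  rw [← hconst, smul_smul, ← exp_add, add_neg_cancel, exp_zero, one_smul]

theorem hasDerivAt_max_zero_pow {n : ℕ} (hn : 1 < n) (y : ℝ) :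
    HasDerivAt (fun y : ℝ => max y 0 ^ n) (n * max y 0 ^ (n - 1)) y := by
  refine hasDerivAt_of_hasDerivAt_of_ne' (f := fun y : ℝ => max y 0 ^ n)
    (g := fun y => n * max y 0 ^ (n - 1)) (x := 0) (fun y hy => ?_)
    (by fun_prop) (by fun_prop) y
  rcases lt_or_gt_of_ne hy with hneg | hpos
  · have hmax : (fun z : ℝ => max z 0 ^ n) =ᶠ[𝓝 y] fun _ => 0 := by
      filter_upwards [Iio_mem_nhds hneg] with z hz
      rw [max_eq_right hz.le, zero_pow (by lia)]
    rw [max_eq_right hneg.le, zero_pow (by lia), mul_zero]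
    exact (hasDerivAt_const y 0).congr_of_eventuallyEq hmax
  · have hmax : (fun z : ℝ => max z 0 ^ n) =ᶠ[𝓝 y] fun z => z ^ n := by
      filter_upwards [Ioi_mem_nhds hpos] with z hz
      rw [max_eq_left hz.le]
    rw [max_eq_left hpos.le]
    exact (hasDerivAt_pow n y).congr_of_eventuallyEq hmax

theorem eq_zero_of_tendsto_of_tendsto_hasDerivAt {f f' : ℝ → ℝ} {l m : ℝ}
    (hf : ∀ t, HasDerivAt f (f' t) t) (hl : Tendsto f atTop (𝓝 l))
    (hm : Tendsto f' atTop (𝓝 m)) : m = 0 := by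
  have mean_value (t : ℝ) : ∃ s, t < s ∧ f' s = f (t + 1) - f t := by
    obtain ⟨s, hs, hslope⟩ := exists_hasDerivAt_eq_slope f f' (lt_add_one t)
      (fun s _ => (hf s).continuousAt.continuousWithinAt) (fun s _ => hf s)
    exact ⟨s, hs.1, by rw [hslope, add_sub_cancel_left, div_one]⟩
  choose s hts hs using mean_value
  have hincrement : Tendsto (fun t => f (t + 1) - f t) atTop (𝓝 0) := by
    simpa using (hl.comp (tendsto_atTop_add_const_right atTop 1 tendsto_id)).sub hl
  have hderiv : Tendsto (fun t => f' (s t)) atTop (𝓝 m) :=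
    hm.comp (tendsto_atTop_mono (fun t => (hts t).le) tendsto_id)
  simp only [hs] at hderiv
  exact tendsto_nhds_unique hderiv hincrement

section ScalarAutonomous

variable {W W' q : ℝ → ℝ} {t₀ b : ℝ}

theorem eq_comp_of_hasDerivAt_mul_deriv {p : ℝ → ℝ} (hW : ∀ x, HasDerivAt W (W' x) x)
    (hW' : Continuous W') (hq : ∀ t, HasDerivAt q (p t) t)
    (hp : ∀ t, HasDerivAt p (W (q t) * W' (q t)) t) (h₀ : p t₀ = W (q t₀)) (t : ℝ) :
    p t = W (q t) := by
  have hqc : Continuous q := continuous_iff_continuousAt.2 fun t => (hq t).continuousAt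
  have hdefect (t : ℝ) :
      HasDerivAt (fun t => p t - W (q t)) (-W' (q t) • (p t - W (q t))) t :=
    ((hp t).sub ((hW (q t)).comp t (hq t))).congr_deriv (by rw [smul_eq_mul]; ring)
  have h := eq_exp_integral_smul_of_hasDerivAt_smul (hW'.comp hqc).neg hdefect t₀ t
  rwa [h₀, sub_self, smul_zero, sub_eq_zero] at h

theorem pos_comp_of_hasDerivAt_comp (hW : ∀ x, HasDerivAt W (W' x) x) (hW' : Continuous W')
    (hq : ∀ t, HasDerivAt q (W (q t)) t) (h₀ : 0 < W (q t₀)) (t : ℝ) : 0 < W (q t) := by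
  have hqc : Continuous q := continuous_iff_continuousAt.2 fun t => (hq t).continuousAt
  have hvelocity (t : ℝ) : HasDerivAt (fun t => W (q t)) (W' (q t) • W (q t)) t :=
    (hW (q t)).comp t (hq t)
  rw [eq_exp_integral_smul_of_hasDerivAt_smul (hW'.comp hqc) hvelocity t₀ t]
  exact mul_pos (exp_pos _) h₀

theorem strictMono_of_hasDerivAt_comp (hW : ∀ x, HasDerivAt W (W' x) x) (hW' : Continuous W')
    (hq : ∀ t, HasDerivAt q (W (q t)) t) (h₀ : 0 < W (q t₀)) : StrictMono q :=
  strictMono_of_hasDerivAt_pos hq (pos_comp_of_hasDerivAt_comp hW hW' hq h₀)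

theorem lt_of_hasDerivAt_comp_of_eq_zero (hW : ∀ x, HasDerivAt W (W' x) x) (hW' : Continuous W')
    (hq : ∀ t, HasDerivAt q (W (q t)) t) (h₀ : 0 < W (q t₀)) (hb : W b = 0) (hq₀ : q t₀ < b)
    (t : ℝ) : q t < b := by
  have hqc : Continuous q := continuous_iff_continuousAt.2 fun t => (hq t).continuousAt
  by_contra! hle
  obtain ⟨s, rfl⟩ := mem_range_of_exists_le_of_exists_ge hqc ⟨t₀, hq₀.le⟩ ⟨t, hle⟩
  exact (pos_comp_of_hasDerivAt_comp hW hW' hq h₀ s).ne' hb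

theorem tendsto_of_hasDerivAt_comp_of_eq_zero (hW : ∀ x, HasDerivAt W (W' x) x)
    (hW' : Continuous W') (hq : ∀ t, HasDerivAt q (W (q t)) t) (hq₀ : q t₀ < b)
    (hpos : ∀ x ∈ Ico (q t₀) b, 0 < W x) (hb : W b = 0) : Tendsto q atTop (𝓝 b) := by
  have h₀ : 0 < W (q t₀) := hpos _ (left_mem_Ico.2 hq₀)
  have hmono : Monotone q := (strictMono_of_hasDerivAt_comp hW hW' hq h₀).monotone
  have hle (t : ℝ) : q t ≤ b := (lt_of_hasDerivAt_comp_of_eq_zero hW hW' hq h₀ hb hq₀ t).le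
  have hlim : Tendsto q atTop (𝓝 (⨆ t, q t)) :=
    tendsto_atTop_ciSup hmono ⟨b, forall_mem_range.2 hle⟩
  set l := ⨆ t, q t
  have hWl : W l = 0 :=
    eq_zero_of_tendsto_of_tendsto_hasDerivAt hq hlim ((hW l).continuousAt.tendsto.comp hlim)
  have hlb : l ≤ b := le_of_tendsto' hlim hle
  have hlq : q t₀ ≤ l := hmono.ge_of_tendsto hlim t₀
  obtain hlt | heq := hlb.lt_or_eq
  · exact absurd hWl (hpos l ⟨hlq, hlt⟩).ne'
  · rwa [heq] at hlim

end ScalarAutonomous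

/-- The upper branch `p = separatrix x` of the energy level `p ^ 2 / 2 + g x = 1`, which joins the
equilibria `(-1, 0)` and `(1, 0)` of (HS); truncating `1 - x ^ 2` at `0` extends it by `0`. -/
noncomputable def separatrix (x : ℝ) : ℝ := √2 * max (1 - x ^ 2) 0 ^ 2

/-- The derivative of `separatrix`. -/
noncomputable def separatrix' (x : ℝ) : ℝ := -(4 * √2 * x * max (1 - x ^ 2) 0)

theorem separatrix_of_abs_le_one {x : ℝ} (hx : |x| ≤ 1) :
    separatrix x = √2 * (1 - x ^ 2) ^ 2 := by
  rw [separatrix, max_eq_left (sub_nonneg.2 ((sq_le_one_iff_abs_le_one x).2 hx))]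

theorem separatrix_pos {x : ℝ} (hx : |x| < 1) : 0 < separatrix x := by
  have : 0 < 1 - x ^ 2 := sub_pos.2 ((sq_lt_one_iff_abs_lt_one x).2 hx)
  rw [separatrix_of_abs_le_one hx.le]
  positivity

theorem hasDerivAt_separatrix (x : ℝ) : HasDerivAt separatrix (separatrix' x) x := by
  have hinner : HasDerivAt (fun x : ℝ => 1 - x ^ 2) (-(2 * x)) x := by
    simpa using (hasDerivAt_pow 2 x).const_sub 1
  have houter := hasDerivAt_max_zero_pow one_lt_two (1 - x ^ 2)
  refine ((houter.comp x hinner).const_mul √2).congr_deriv ?_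
  rw [separatrix']
  push_cast
  ring

theorem continuous_separatrix' : Continuous separatrix' := by
  unfold separatrix'
  fun_prop

theorem separatrix_mul_separatrix' (x : ℝ) : separatrix x * separatrix' x = -g' x := by
  have hsqrt : √2 ^ 2 = 2 := sq_sqrt zero_le_two
  unfold separatrix separatrix' g'
  split_ifs with hx
  · rw [max_eq_left (sub_nonneg.2 ((sq_le_one_iff_abs_le_one x).2 hx))]
    linear_combination -(4 * x * (1 - x ^ 2) ^ 3) * hsqrt
  · rw [max_eq_right (sub_nonpos.2 ((one_lt_sq_iff_one_lt_abs x).2 (not_le.1 hx)).le)]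
    ring

theorem hasDerivAt_separatrix_comp_of_isHSSol {q p : ℝ → ℝ} {t₀ : ℝ} (hsol : IsHSSol q p)
    (h₀ : p t₀ = separatrix (q t₀)) (t : ℝ) : HasDerivAt q (separatrix (q t)) t := by
  have hp (t : ℝ) : HasDerivAt p (separatrix (q t) * separatrix' (q t)) t := by
    rw [separatrix_mul_separatrix']
    exact hsol.2 t
  rw [← eq_comp_of_hasDerivAt_mul_deriv hasDerivAt_separatrix continuous_separatrix' hsol.1 hp h₀ t]
  exact hsol.1 t

theorem stmt_4_general {q p : ℝ → ℝ} {t₀ : ℝ} (hsol : IsHSSol q p) (hq₀ : |q t₀| < 1)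
    (hp₀ : p t₀ = √2 * (1 - q t₀ ^ 2) ^ 2) :
    StrictMono q ∧ Tendsto q atTop (𝓝 1) := by
  have hq : ∀ t, HasDerivAt q (separatrix (q t)) t :=
    hasDerivAt_separatrix_comp_of_isHSSol hsol (hp₀.trans (separatrix_of_abs_le_one hq₀.le).symm)
  have hpos : ∀ x ∈ Ico (q t₀) 1, 0 < separatrix x := fun x hx =>
    separatrix_pos (abs_lt.2 ⟨(abs_lt.1 hq₀).1.trans_le hx.1, hx.2⟩)
  have hone : separatrix 1 = 0 := by simp [separatrix]
  exact ⟨strictMono_of_hasDerivAt_comp hasDerivAt_separatrix continuous_separatrix' hq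
      (separatrix_pos hq₀),
    tendsto_of_hasDerivAt_comp_of_eq_zero hasDerivAt_separatrix continuous_separatrix' hq
      (abs_lt.1 hq₀).2 hpos hone⟩

/-- Lemma ce3 (ii): the solution of (HS) with datum `(0, √2)` has `q` increasing on
`[0, ∞)` and `q(t) → 1` as `t → +∞`. -/
theorem stmt_4 (q p : ℝ → ℝ)
    (hsol : IsHSSol q p) (hq0 : q 0 = 0) (hp0 : p 0 = Real.sqrt 2) :
    StrictMonoOn q (Ici 0) ∧ Tendsto q atTop (𝓝 1) := by
  obtain ⟨hmono, hlim⟩ := stmt_4_general hsol (t₀ := 0) (by simp [hq0]) (by simp [hq0, hp0])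
  exact ⟨hmono.strictMonoOn _, hlim⟩
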